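/- For n ≥ 3, let M_C(n) denote the maximum cardinality of a degree-doubling family of Hamiltonian cycles on Fin n and let M_P(n) denote the maximum cardinality of a degree-doubling family of Hamiltonian paths on Fin n. Then (n-1) · M_P(n) ≥ 2 · M_C(n). -/

import Mathlib

/-!
Fix an edge `uv`. Deleting it from Hamiltonian cycles that all contain it yields Hamiltonian paths
(`isHamPath_deleteEdges`). If two such cycles have a union with a vertex `w` of degree 4, then `w`
is neither `u` nor `v`, because at an endpoint of the common edge the union has degree at most 3;
so the degree of `w` in the union survives the deletion. Hence in a degree-doubling family of
Hamiltonian cycles every pair `uv` is an edge of at most `maxDD n IsHamPath` members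
(`card_filter_adj_le`). Summing over the `n * (n - 1)` ordered pairs of distinct vertices counts
every cycle `2 * n` times, which gives the inequality.

That deleting an edge of a cycle leaves it connected is a parity argument: if `uv` were a bridge,
then `u` would be the only vertex of odd degree in its component after the deletion.
-/


open SimpleGraph

/-- The degree of a vertex `v` in a simple graph `G` on `Fin n`. -/
noncomputable def deg {n : ℕ} (G : SimpleGraph (Fin n)) (v : Fin n) : ℕ :=
  Nat.card (G.neighborSet v)

/-- A Hamiltonian cycle on `Fin n`: a connected, 2-regular simple graph. -/
def IsHamCycle {n : ℕ} (G : SimpleGraph (Fin n)) : Prop :=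
  G.Connected ∧ ∀ v, deg G v = 2

/-- A family of graphs is degree-doubling if the union of any two distinct
members has a vertex of degree 4. -/
def DegreeDoubling {n : ℕ} (𝒢 : Finset (SimpleGraph (Fin n))) : Prop :=
  ∀ F ∈ 𝒢, ∀ G ∈ 𝒢, F ≠ G → ∃ v, deg (F ⊔ G) v = 4

/-- A Hamiltonian path on `Fin n`: a connected simple graph with exactly two
vertices of degree 1 and all other vertices of degree 2. -/
def IsHamPath {n : ℕ} (G : SimpleGraph (Fin n)) : Prop :=
  G.Connected ∧ ∃ a b : Fin n, a ≠ b ∧ deg G a = 1 ∧ deg G b = 1 ∧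
    ∀ v : Fin n, v ≠ a → v ≠ b → deg G v = 2

/-- The maximum cardinality of a degree-doubling family of graphs on `Fin n`
all of whose members satisfy `pred`. -/
noncomputable def maxDD (n : ℕ) (pred : SimpleGraph (Fin n) → Prop) : ℕ :=
  sSup {k | ∃ 𝒢 : Finset (SimpleGraph (Fin n)),
    (∀ G ∈ 𝒢, pred G) ∧ DegreeDoubling 𝒢 ∧ 𝒢.card = k}

lemma deg_eq_ncard {n : ℕ} (G : SimpleGraph (Fin n)) (v : Fin n) :
    deg G v = (G.neighborSet v).ncard := rfl

lemma deg_deleteEdges_of_ne {n : ℕ} (G : SimpleGraph (Fin n)) {u v w : Fin n}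
    (hu : w ≠ u) (hv : w ≠ v) : deg (G.deleteEdges {s(u, v)}) w = deg G w := by
  have : (G.deleteEdges {s(u, v)}).neighborSet w = G.neighborSet w := by
    ext x
    simp [hu, hv]
  rw [deg_eq_ncard, deg_eq_ncard, this]

lemma deg_deleteEdges_left {n : ℕ} {G : SimpleGraph (Fin n)} (hG : IsHamCycle G) {u v : Fin n}
    (h : G.Adj u v) : deg (G.deleteEdges {s(u, v)}) u = 1 := by
  have h1 : (G.deleteEdges {s(u, v)}).neighborSet u = G.neighborSet u \ {v} := by
    ext x
    simp only [mem_neighborSet, deleteEdges_adj, Set.mem_singleton_iff, Sym2.eq_iff, Set.mem_sdiff]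
    grind
  have h2 := hG.2 u
  have h3 := Set.ncard_sdiff_singleton_add_one (s := G.neighborSet u) (a := v) h
  rw [deg_eq_ncard] at h2 ⊢
  rw [h1]
  omega

lemma deg_deleteEdges_right {n : ℕ} {G : SimpleGraph (Fin n)} (hG : IsHamCycle G) {u v : Fin n}
    (h : G.Adj u v) : deg (G.deleteEdges {s(u, v)}) v = 1 := by
  rw [Sym2.eq_swap]
  exact deg_deleteEdges_left hG h.symm

/-- No edge of a Hamiltonian cycle is a bridge. -/
lemma reachable_deleteEdges {n : ℕ} {G : SimpleGraph (Fin n)} (hG : IsHamCycle G) {u v : Fin n}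
    (h : G.Adj u v) : (G.deleteEdges {s(u, v)}).Reachable u v := by
  classical
  by_contra hr
  set H := G.deleteEdges {s(u, v)} with hH
  -- `K` keeps only the component of `u` in `H`; all vertices outside become isolated.
  let K : SimpleGraph (Fin n) :=
    { Adj := fun x y => H.Adj x y ∧ H.Reachable u x
      symm := ⟨fun x y hxy => ⟨hxy.1.symm, hxy.2.trans hxy.1.reachable⟩⟩
      loopless := ⟨fun x hx => H.loopless.irrefl x hx.1⟩ }
  have hdeg : ∀ w, K.degree w = if H.Reachable u w then deg H w else 0 := by
    intro w
    rw [← card_neighborSet_eq_degree, ← Nat.card_eq_fintype_card]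
    split_ifs with hw
    · have : K.neighborSet w = H.neighborSet w := by
        ext x
        simp [K, hw]
      rw [this]; rfl
    · have : K.neighborSet w = ∅ := by
        ext x
        simp [K, hw]
      rw [this]; simp
  have hodd : (Finset.univ.filter fun w => Odd (K.degree w)) = {u} := by
    ext w
    simp only [Finset.mem_filter, Finset.mem_univ, true_and, Finset.mem_singleton, hdeg]
    constructor
    · intro hw
      by_contra hne
      split_ifs at hw with hreach
      · have hwv : w ≠ v := fun e => hr (e ▸ hreach)
        rw [hH, deg_deleteEdges_of_ne G hne hwv, hG.2 w] at hw
        exact absurd hw (by decide)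
      · exact absurd hw (by decide)
    · rintro rfl
      rw [if_pos (Reachable.refl _), hH, deg_deleteEdges_left hG h]
      decide
  have := K.even_card_odd_degree_vertices
  rw [hodd] at this
  simp at this

lemma isHamPath_deleteEdges {n : ℕ} {G : SimpleGraph (Fin n)} (hG : IsHamCycle G) {u v : Fin n}
    (h : G.Adj u v) : IsHamPath (G.deleteEdges {s(u, v)}) := by
  refine ⟨hG.1.connected_delete_edge_of_not_isBridge fun hb => ?_, u, v, h.ne,
    deg_deleteEdges_left hG h, deg_deleteEdges_right hG h, fun w hu hv => ?_⟩
  · exact isBridge_iff.1 hb (reachable_deleteEdges hG h)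
  · rw [deg_deleteEdges_of_ne G hu hv, hG.2 w]

/-- Two Hamiltonian cycles sharing the edge `uv` have a union of degree at most 3 at `u`. -/
lemma deg_sup_ne_four {n : ℕ} {F G : SimpleGraph (Fin n)} (hF : IsHamCycle F) (hG : IsHamCycle G)
    {u v : Fin n} (h : F.Adj u v) (h' : G.Adj u v) : deg (F ⊔ G) u ≠ 4 := by
  have h1 := hF.2 u
  have h2 := hG.2 u
  have h3 := Set.ncard_union_add_ncard_inter (F.neighborSet u) (G.neighborSet u)
  have h4 : 0 < (F.neighborSet u ∩ G.neighborSet u).ncard :=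
    (Set.ncard_pos).2 ⟨v, h, h'⟩
  have h5 : (F ⊔ G).neighborSet u = F.neighborSet u ∪ G.neighborSet u := by
    ext x
    simp
  rw [deg_eq_ncard] at h1 h2 ⊢
  rw [h5]
  omega

lemma bddAbove_card_degreeDoubling (n : ℕ) (pred : SimpleGraph (Fin n) → Prop) :
    BddAbove {k | ∃ 𝒢 : Finset (SimpleGraph (Fin n)),
      (∀ G ∈ 𝒢, pred G) ∧ DegreeDoubling 𝒢 ∧ 𝒢.card = k} := by
  classical
  refine ⟨Fintype.card (SimpleGraph (Fin n)), ?_⟩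
  rintro k ⟨𝒢, -, -, rfl⟩
  exact Finset.card_le_univ 𝒢

open Classical in
lemma card_filter_adj_le {n : ℕ} {𝒢 : Finset (SimpleGraph (Fin n))} (hC : ∀ G ∈ 𝒢, IsHamCycle G)
    (hD : DegreeDoubling 𝒢) (u v : Fin n) :
    (𝒢.filter fun G => G.Adj u v).card ≤ maxDD n IsHamPath := by
  refine le_csSup (bddAbove_card_degreeDoubling n IsHamPath)
    ⟨(𝒢.filter fun G => G.Adj u v).image fun G => G.deleteEdges {s(u, v)}, ?_, ?_, ?_⟩
  · simp only [Finset.mem_image, Finset.mem_filter]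
    rintro _ ⟨G, ⟨hG, h⟩, rfl⟩
    exact isHamPath_deleteEdges (hC G hG) h
  · simp only [DegreeDoubling, Finset.mem_image, Finset.mem_filter]
    rintro _ ⟨F, ⟨hF, hFa⟩, rfl⟩ _ ⟨G, ⟨hG, hGa⟩, rfl⟩ hne
    obtain ⟨w, hw⟩ := hD F hF G hG fun e => hne (e ▸ rfl)
    have hu : w ≠ u := by
      rintro rfl
      exact deg_sup_ne_four (hC F hF) (hC G hG) hFa hGa hw
    have hv : w ≠ v := by
      rintro rfl
      exact deg_sup_ne_four (hC F hF) (hC G hG) hFa.symm hGa.symm hw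
    have hsup : F.deleteEdges {s(u, v)} ⊔ G.deleteEdges {s(u, v)}
        = (F ⊔ G).deleteEdges {s(u, v)} := by
      ext x y
      simp only [sup_adj, deleteEdges_adj]
      tauto
    exact ⟨w, by rw [hsup, deg_deleteEdges_of_ne _ hu hv, hw]⟩
  · refine Finset.card_image_of_injOn fun F hF G hG hFG => ?_
    simp only [Finset.coe_filter, Set.mem_ofPred_eq] at hF hG
    ext x y
    by_cases hxy : s(x, y) = s(u, v)
    · rw [← mem_edgeSet, ← mem_edgeSet, hxy]
      exact iff_of_true hF.2 hG.2
    · have := congrArg (fun K : SimpleGraph (Fin n) => K.Adj x y) hFG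
      simpa only [deleteEdges_adj, Set.mem_singleton_iff, hxy, not_false_eq_true, and_true,
        eq_iff_iff] using this

theorem stmt_15 (n : ℕ) (hn : 3 ≤ n) :
    2 * maxDD n IsHamCycle ≤ (n - 1) * maxDD n IsHamPath := by
  classical
  obtain ⟨𝒢, hC, hD, hcard⟩ := Nat.sSup_mem
    (s := {k | ∃ 𝒢 : Finset (SimpleGraph (Fin n)),
      (∀ G ∈ 𝒢, IsHamCycle G) ∧ DegreeDoubling 𝒢 ∧ 𝒢.card = k})
    ⟨0, ∅, by simp, by simp [DegreeDoubling], rfl⟩ (bddAbove_card_degreeDoubling n IsHamCycle)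
  change 𝒢.card = maxDD n IsHamCycle at hcard
  rw [← hcard]
  set M := maxDD n IsHamPath
  -- Each cycle contains `2 * n` ordered pairs of adjacent vertices, all off the diagonal.
  have hG : ∀ G ∈ 𝒢,
      ((Finset.univ : Finset (Fin n)).offDiag.filter fun p => G.Adj p.1 p.2).card = n * 2 := by
    intro G hG
    have h1 : ((Finset.univ : Finset (Fin n)).offDiag.filter fun p => G.Adj p.1 p.2)
        = ((Finset.univ : Finset (Fin n)).sigma fun u => G.neighborFinset u).map
          (Equiv.sigmaEquivProd (Fin n) (Fin n)).toEmbedding := by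
      ext ⟨x, y⟩
      simp only [Finset.mem_filter, Finset.mem_offDiag, Finset.mem_univ, true_and,
        Finset.mem_map_equiv, Finset.mem_sigma, mem_neighborFinset]
      exact ⟨fun h => h.2, fun h => ⟨h.ne, h⟩⟩
    have h2 : ∀ u, G.degree u = 2 := fun u => by
      rw [← card_neighborSet_eq_degree, ← Nat.card_eq_fintype_card]
      exact (hC G hG).2 u
    simp [h1, h2]
  have hsum := Finset.sum_card_bipartiteAbove_eq_sum_card_bipartiteBelow
    (s := 𝒢) (t := (Finset.univ : Finset (Fin n)).offDiag) fun G p => G.Adj p.1 p.2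
  simp only [Finset.bipartiteAbove, Finset.bipartiteBelow] at hsum
  rw [Finset.sum_congr rfl hG, Finset.sum_const, smul_eq_mul] at hsum
  have hle : 𝒢.card * (n * 2) ≤ (n * n - n) * M := by
    rw [hsum]
    refine (Finset.sum_le_card_nsmul _ _ M fun p _ => card_filter_adj_le hC hD p.1 p.2).trans ?_
    simp [Finset.offDiag_card]
  refine le_of_mul_le_mul_left (a := n) ?_ (by omega)
  calc n * (2 * 𝒢.card) = 𝒢.card * (n * 2) := by ring
    _ ≤ (n * n - n) * M := hle
    _ = n * ((n - 1) * M) := by rw [← mul_assoc, Nat.mul_sub_one]
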